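/- arXiv:1110.3032 — 2 statements merged into one kernel-verified Lean document; each statement's English description precedes it below -/
import Mathlib

section
/- For all n ≥ 0, q_n = D_n, and for every j ∈ {1,…,p}, p_n^{(j)} = D_n^{(1)} + D_n^{(2)} + ⋯ + D_n^{(j)}. -/
/-!
The proof compares recurrences with inhomogeneous terms.

Splitting off the prescribed initial data `y_{-p}, …, y_{-1}` from the `(p+2)`-term recurrence gives
`y_{n+1} = z y_n - ∑_{k ≤ n} A_{n,k} y_k - r_n`, where `r_n` only involves the entries of `a` with
negative column index (`solSeq_succ`). For `q` all `r_n` vanish; for `p^{(j)}`, the convention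
`a_{i,j} = -1` for negative `j` gives `r_n = -[n < j]`.

On the determinant side, let `M = z I - A_{n+1}` and `y = (q_0, …, q_n)`. The homogeneous recurrence
says that `M y = q_{n+1} e_n`. By Cramer's rule `det M = det M * q_0` is the determinant of `M` with
its first column replaced by `q_{n+1} e_n`; expanding along that column leaves a lower triangular
minor with diagonal entries `-1`, so `det M = q_{n+1}` (`charpoly_hessenberg`). Applied to the
shifted array `a (i + t) (j + t)`, this shows that `D^{(t)}` satisfies the same recurrence with
inhomogeneous term `[n + 1 = t]` (`Dpolj_succ`). Summing over `t = 1, …, j` yields `[n < j]`, hence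
`p^{(j)}` and `D^{(1)} + ⋯ + D^{(j)}` satisfy the same recurrence and both vanish at `n = 0`.
-/

open Polynomial

noncomputable section

/-- The solution of the `(p+2)`-term recurrence
`z y_n = y_{n+1} + a_{n,n} y_n + a_{n,n-1} y_{n-1} + ⋯ + a_{n,n-p} y_{n-p}` with prescribed
initial data `y_{-p}, …, y_0`.  Here `solSeq p a init m` is `y_{m - p}`, and
`init m` (for `m ≤ p`) prescribes `y_{m-p}`. -/
noncomputable def solSeq (p : ℕ) (a : ℕ → ℤ → ℂ) (init : ℕ → Polynomial ℂ) :
    ℕ → Polynomial ℂ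
  | m =>
    if h : m ≤ p then init m
    else
      (X - C (a (m - p - 1) ((m : ℤ) - p - 1))) * solSeq p a init (m - 1)
        - ∑ i ∈ Finset.Icc 1 p,
            C (a (m - p - 1) ((m : ℤ) - p - 1 - i)) * solSeq p a init (m - 1 - i)
  termination_by m => m
  decreasing_by all_goals omega

/-- The polynomials `q_n`. -/
noncomputable def qSeq (p : ℕ) (a : ℕ → ℤ → ℂ) (n : ℕ) : Polynomial ℂ :=
  solSeq p a (fun m => if m = p then 1 else 0) (n + p)

/-- The polynomials `p_n^{(j)}`. -/
noncomputable def pSeq (p : ℕ) (a : ℕ → ℤ → ℂ) (j n : ℕ) : Polynomial ℂ :=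
  solSeq p a (fun m => if m = j - 1 then 1 else 0) (n + p)

/-- Entry `(i,j)` of the banded Hessenberg matrix `A`. -/
def Aent (p : ℕ) (a : ℕ → ℤ → ℂ) (i j : ℕ) : ℂ :=
  if j = i + 1 then 1 else if j ≤ i ∧ i ≤ j + p then a i (j : ℤ) else 0

/-- `D_n(z) = det (z I_n - A_n)`. -/
noncomputable def Dpol (p : ℕ) (a : ℕ → ℤ → ℂ) (n : ℕ) : Polynomial ℂ :=
  Matrix.charpoly (Matrix.of fun i j : Fin n => Aent p a i j)

/-- `D_n^{(j)}(z) = det (z I_{n-j} - (A_n)^{[1,…,j;1,…,j]})`, with `D_n^{(j)} = 0` for `n < j`. -/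
noncomputable def Dpolj (p : ℕ) (a : ℕ → ℤ → ℂ) (j n : ℕ) : Polynomial ℂ :=
  if n < j then 0
  else Matrix.charpoly (Matrix.of fun i i' : Fin (n - j) => Aent p a (i + j) (i' + j))

/-- Characteristic polynomials of the leading principal submatrices of a lower Hessenberg matrix
with unit superdiagonal are determined by the full-history recurrence. -/
theorem charpoly_hessenberg (B : ℕ → ℕ → ℂ) (hB1 : ∀ i, B i (i + 1) = 1)
    (hB0 : ∀ i j, i + 1 < j → B i j = 0) (y : ℕ → ℂ[X]) (y0 : y 0 = 1)
    (hy : ∀ n, y (n + 1) = X * y n - ∑ k ∈ Finset.range (n + 1), C (B n k) * y k) (n : ℕ) :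
    Matrix.charpoly (Matrix.of fun i j : Fin n => B i j) = y n := by
  cases n with
  | zero => simp [y0, Matrix.charpoly]
  | succ n =>
    set M := Matrix.charmatrix (Matrix.of fun i j : Fin (n + 1) => B i j) with hM
    have hMy : M.mulVec (fun k : Fin (n + 1) => y k) = Pi.single (Fin.last n) (y (n + 1)) := by
      ext1 i
      have h1 : M.mulVec (fun k : Fin (n + 1) => y k) i
          = X * y i - ∑ k ∈ Finset.range (n + 1), C (B i k) * y k := by
        rw [hM, Matrix.mulVec, dotProduct, ← Fin.sum_univ_eq_sum_range (fun k => C (B i k) * y k)]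
        simp only [Matrix.charmatrix_apply, Matrix.of_apply, sub_mul, Finset.sum_sub_distrib,
          Matrix.diagonal_apply, ite_mul, zero_mul, Finset.sum_ite_eq, Finset.mem_univ, if_true]
      rw [h1]
      by_cases hi : i = Fin.last n
      · subst hi
        simp [hy n]
      · rw [Pi.single_eq_of_ne hi]
        have hlt : (i : ℕ) < n := Fin.val_lt_last hi
        obtain ⟨d, hd⟩ : ∃ d, n + 1 = ((i : ℕ) + 1) + 1 + d := ⟨n - 1 - i, by omega⟩
        generalize (i : ℕ) = r at hd ⊢
        rw [hd, Finset.sum_range_add, Finset.sum_range_succ _ (r + 1), hB1, hy r,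
          Finset.sum_eq_zero (s := Finset.range d)]
        · simp
        · intro x _
          rw [hB0 _ _ (by omega)]
          simp
    have hcr : M.det * y 0 = (M.updateCol 0 (Pi.single (Fin.last n) (y (n + 1)))).det := by
      rw [← hMy, ← Matrix.cramer_apply, Matrix.cramer_eq_adjugate_mulVec, Matrix.mulVec_mulVec,
        Matrix.adjugate_mul, Matrix.smul_mulVec, Matrix.one_mulVec]
      simp
    have hminor : ((M.updateCol 0 (Pi.single (Fin.last n) (y (n + 1)))).submatrix
        (Fin.last n).succAbove Fin.succ).det = (-1) ^ n := by
      rw [Matrix.det_of_isLowerTriangular]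
      · rw [Finset.prod_congr rfl (g := fun _ => (-1 : ℂ[X]))]
        · simp
        · intro i _
          have hne : (Fin.castSucc i) ≠ Fin.succ i := by
            intro h
            simpa using congrArg Fin.val h
          simp [hM, hne, hB1]
      · intro i j hij
        have hij' : (i : ℕ) < j := by simpa using hij
        have hne : (Fin.castSucc i) ≠ Fin.succ j := by
          intro h
          have := congrArg Fin.val h
          simp at this
          omega
        have h0 : B i ((j : ℕ) + 1) = 0 := hB0 _ _ (by omega)
        simp [hM, hne, h0]
    have hdet : M.det = y (n + 1) := by
      rw [y0, mul_one] at hcr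
      rw [hcr, Matrix.det_succ_column_zero, Finset.sum_eq_single (Fin.last n), hminor]
      · simp only [Fin.val_last, Matrix.updateCol_self, Pi.single_eq_same]
        rw [mul_right_comm, ← mul_pow]
        simp
      · intro i _ hi
        simp [hi]
      · simp
    exact hdet

/-- The recurrence with the prescribed values at negative indices separated out: the last sum is
over the positions `m < p`, which stand for the index `m - p < 0`. -/
theorem solSeq_succ (p : ℕ) (a : ℕ → ℤ → ℂ) (init : ℕ → ℂ[X]) (n : ℕ) :
    solSeq p a init (n + 1 + p) = X * solSeq p a init (n + p)
      - ∑ k ∈ Finset.range (n + 1), C (Aent p a n k) * solSeq p a init (k + p)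
      - ∑ m ∈ Finset.Ico n p, C (a n ((m : ℤ) - p)) * init m := by
  set f : ℕ → ℂ[X] := fun m => C (a n ((m : ℤ) - p)) * solSeq p a init m with hf
  have h1 : solSeq p a init (n + 1 + p)
      = X * solSeq p a init (n + p) - ∑ m ∈ Finset.Ico n (n + p + 1), f m := by
    rw [solSeq, dif_neg (by omega)]
    have e1 : n + 1 + p - p - 1 = n := by omega
    have e2 : n + 1 + p - 1 = n + p := by omega
    have e3 : ((n + 1 + p : ℕ) : ℤ) - p - 1 = n := by push_cast; ring
    rw [e1, e2, e3, Finset.sum_Ico_succ_top (by omega)]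
    have h2 : ∑ i ∈ Finset.Icc 1 p, C (a n ((n : ℤ) - i)) * solSeq p a init (n + p - i)
        = ∑ m ∈ Finset.Ico n (n + p), f m := by
      refine Finset.sum_bij' (fun i _ => n + p - i) (fun m _ => n + p - m) ?_ ?_ ?_ ?_ ?_
      · intro i hi; simp only [Finset.mem_Icc, Finset.mem_Ico] at *; omega
      · intro i hi; simp only [Finset.mem_Icc, Finset.mem_Ico] at *; omega
      · intro i hi; simp only [Finset.mem_Icc] at *; omega
      · intro i hi; simp only [Finset.mem_Ico] at *; omega
      · intro i hi
        simp only [Finset.mem_Icc] at hi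
        have : ((n + p - i : ℕ) : ℤ) - p = n - i := by omega
        simp only [hf, this]
    have h3 : f (n + p) = C (a n n) * solSeq p a init (n + p) := by
      simp [hf]
    rw [h2, h3]
    ring
  have h4 : ∑ m ∈ Finset.Ico n (n + p + 1), f m
      = ∑ k ∈ Finset.range (n + 1), C (Aent p a n k) * solSeq p a init (k + p)
        + ∑ m ∈ Finset.Ico n p, C (a n ((m : ℤ) - p)) * init m := by
    rw [← Finset.sum_filter_add_sum_filter_not _ (fun m => p ≤ m)]
    congr 1
    · symm
      rw [← Finset.sum_filter_of_ne (p := fun k => n ≤ k + p)]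
      · refine Finset.sum_bij' (fun k _ => k + p) (fun m _ => m - p) ?_ ?_ ?_ ?_ ?_
        · intro i hi; simp only [Finset.mem_filter, Finset.mem_range, Finset.mem_Ico] at *; omega
        · intro i hi; simp only [Finset.mem_filter, Finset.mem_range, Finset.mem_Ico] at *; omega
        · intro i hi; simp only [Finset.mem_filter, Finset.mem_range] at *; omega
        · intro i hi; simp only [Finset.mem_filter, Finset.mem_Ico] at *; omega
        · intro i hi
          simp only [Finset.mem_filter, Finset.mem_range] at hi
          have e : ((i + p : ℕ) : ℤ) - p = i := by push_cast; ring
          simp only [hf, e, Aent]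
          rw [if_neg (by omega), if_pos (by omega)]
      · intro k hk hne
        by_contra hlt
        simp only [Finset.mem_range] at hk
        apply hne
        rw [Aent, if_neg (by omega), if_neg (by omega)]
        simp
    · have hs : (Finset.Ico n (n + p + 1)).filter (fun m => ¬ p ≤ m) = Finset.Ico n p := by
        ext m
        simp only [Finset.mem_filter, Finset.mem_Ico]
        omega
      rw [hs]
      refine Finset.sum_congr rfl fun m hm => ?_
      simp only [Finset.mem_Ico] at hm
      simp only [hf]
      rw [solSeq, dif_pos (by omega)]
  rw [h1, h4]
  ring

theorem qSeq_zero (p : ℕ) (a : ℕ → ℤ → ℂ) : qSeq p a 0 = 1 := by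
  rw [qSeq, solSeq]
  simp

theorem qSeq_succ (p : ℕ) (a : ℕ → ℤ → ℂ) (n : ℕ) :
    qSeq p a (n + 1) = X * qSeq p a n
      - ∑ k ∈ Finset.range (n + 1), C (Aent p a n k) * qSeq p a k := by
  unfold qSeq
  rw [solSeq_succ, Finset.sum_eq_zero (s := Finset.Ico n p), sub_zero]
  intro m hm
  simp only [Finset.mem_Ico] at hm
  rw [if_neg (by omega), mul_zero]

theorem qSeq_eq_Dpol (p : ℕ) (a : ℕ → ℤ → ℂ) (n : ℕ) : qSeq p a n = Dpol p a n := by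
  refine (charpoly_hessenberg (Aent p a) (fun i => by simp [Aent]) ?_ _
    (qSeq_zero p a) (qSeq_succ p a) n).symm
  intro i j hij
  rw [Aent, if_neg (by omega), if_neg (by omega)]

/-- `D^{(t)}` is the `q`-sequence of the array shifted by `t` in both indices. -/
theorem Dpolj_add (p : ℕ) (a : ℕ → ℤ → ℂ) (t s : ℕ) :
    Dpolj p a t (t + s) = qSeq p (fun i j => a (i + t) (j + t)) s := by
  rw [Dpolj, if_neg (by omega), qSeq_eq_Dpol, Dpol, Nat.add_sub_cancel_left]
  congr 1
  ext i j
  simp only [Matrix.of_apply, Aent]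
  congr 1
  · simp only [eq_iff_iff]; omega
  · congr 1
    · simp only [eq_iff_iff]; omega

theorem Dpolj_of_lt (p : ℕ) (a : ℕ → ℤ → ℂ) {t n : ℕ} (h : n < t) : Dpolj p a t n = 0 := by
  rw [Dpolj, if_pos h]

theorem Dpolj_succ (p : ℕ) (a : ℕ → ℤ → ℂ) (t n : ℕ) :
    Dpolj p a t (n + 1) = X * Dpolj p a t n
      - ∑ k ∈ Finset.range (n + 1), C (Aent p a n k) * Dpolj p a t k
      + if n + 1 = t then 1 else 0 := by
  rcases lt_or_ge n t with h | h
  · rw [Dpolj_of_lt p a h, Finset.sum_eq_zero]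
    · by_cases h' : n + 1 = t
      · have := Dpolj_add p a t 0
        rw [add_zero, qSeq_zero] at this
        rw [if_pos h', h', this]
        simp
      · rw [if_neg h', Dpolj_of_lt p a (by omega)]
        simp
    · intro k hk
      simp only [Finset.mem_range] at hk
      rw [Dpolj_of_lt p a (by omega), mul_zero]
  · obtain ⟨s, rfl⟩ := Nat.exists_eq_add_of_le h
    rw [if_neg (by omega), add_zero, add_assoc t s 1, Dpolj_add, Dpolj_add, qSeq_succ,
      Finset.sum_range_add _ t (s + 1), Finset.sum_eq_zero (s := Finset.range t), zero_add]
    · congr 1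
      refine Finset.sum_congr rfl fun k _ => ?_
      rw [Dpolj_add]
      congr 2
      simp only [Aent]
      congr 1
      · simp only [eq_iff_iff]; omega
      · congr 1
        · simp only [eq_iff_iff]; omega
        · rw [add_comm s t]; push_cast; rw [add_comm (k : ℤ)]
    · intro k hk
      simp only [Finset.mem_range] at hk
      rw [Dpolj_of_lt p a hk, mul_zero]

theorem pSeq_succ (p : ℕ) (a : ℕ → ℤ → ℂ)
    (haneg : ∀ i : ℕ, i < p → ∀ j : ℤ, j < 0 → a i j = -1)
    (j : ℕ) (hj : 1 ≤ j) (hjp : j ≤ p) (n : ℕ) :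
    pSeq p a j (n + 1) = X * pSeq p a j n
      - ∑ k ∈ Finset.range (n + 1), C (Aent p a n k) * pSeq p a j k
      + if n < j then 1 else 0 := by
  unfold pSeq
  rw [solSeq_succ, sub_eq_add_neg _ (∑ m ∈ Finset.Ico n p, _)]
  congr 1
  have h : ∑ m ∈ Finset.Ico n p, C (a n ((m : ℤ) - p)) * (if m = j - 1 then (1 : ℂ[X]) else 0)
      = ∑ m ∈ Finset.Ico n p, if m = j - 1 then (-1 : ℂ[X]) else 0 := by
    refine Finset.sum_congr rfl fun m hm => ?_
    simp only [Finset.mem_Ico] at hm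
    rw [haneg n (by omega) _ (by omega)]
    simp
  rw [h, Finset.sum_ite_eq']
  by_cases hn : n < j
  · rw [if_pos hn, if_pos (by rw [Finset.mem_Ico]; omega), neg_neg]
  · rw [if_neg hn, if_neg (by rw [Finset.mem_Ico]; omega), neg_zero]

theorem sum_Dpolj_succ (p : ℕ) (a : ℕ → ℤ → ℂ) (j n : ℕ) :
    ∑ t ∈ Finset.Icc 1 j, Dpolj p a t (n + 1) = X * ∑ t ∈ Finset.Icc 1 j, Dpolj p a t n
      - ∑ k ∈ Finset.range (n + 1), C (Aent p a n k) * ∑ t ∈ Finset.Icc 1 j, Dpolj p a t k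
      + if n < j then 1 else 0 := by
  rw [Finset.sum_congr rfl fun t _ => Dpolj_succ p a t n,
    Finset.sum_add_distrib, Finset.sum_sub_distrib, Finset.sum_comm, Finset.sum_ite_eq]
  simp only [Finset.mul_sum, Finset.mem_Icc]
  congr 1
  by_cases hn : n < j
  · rw [if_pos hn, if_pos (by omega)]
  · rw [if_neg hn, if_neg (by omega)]

theorem qn_eq_Dn_and_pnj_eq_sum_Dnj
    (p : ℕ) (hp : 1 ≤ p) (a : ℕ → ℤ → ℂ)
    (haneg : ∀ i : ℕ, i < p → ∀ j : ℤ, j < 0 → a i j = -1) :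
    (∀ n : ℕ, qSeq p a n = Dpol p a n) ∧
    (∀ j, 1 ≤ j → j ≤ p → ∀ n : ℕ,
      pSeq p a j n = ∑ t ∈ Finset.Icc 1 j, Dpolj p a t n) := by
  refine ⟨qSeq_eq_Dpol p a, fun j hj hjp n => ?_⟩
  induction n using Nat.strong_induction_on with
  | _ n ih =>
    cases n with
    | zero =>
      rw [Finset.sum_eq_zero]
      · rw [pSeq, solSeq, dif_pos (by omega), if_neg (by omega)]
      · intro t ht
        exact Dpolj_of_lt p a (Finset.mem_Icc.1 ht).1
    | succ n =>
      rw [pSeq_succ p a haneg j hj hjp, sum_Dpolj_succ, ih n (by omega)]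
      congr 2
      refine Finset.sum_congr rfl fun k hk => ?_
      rw [ih k (Finset.mem_range.1 hk)]

end
end

section
/- For each k ∈ {0,…,p−1} and every z ∈ ℂ∖Δ_1, z = F_{k+1}(z) + b_{k,k} + b_{k,k−1}/F_k(z) + b_{k,k−2}/(F_k(z) F_{k−1}(z)) + ⋯ + b_{k,k−p}/(F_k(z) F_{k−1}(z) ⋯ F_{k−p+1}(z)), with the identifications b_{k,k−i} = b_{p+k,p+k−i} for i > k and F_{k−i} = F_{p+k−i} for i ≥ k. -/
/-!
The relation is the limit of the recurrence divided by `Q_n`, taken along `n = (m + 1) p + k`: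
`z = Q_{n+1} / Q_n + ∑ i, a_{n,n-i} Q_{n-i} / Q_n`. At a fixed `z` off `Δ_1`, the ratio
`Q_{mp+j} / Q_{mp+j-1}` tends to `F_j(z)` for every `j ≥ 1` (`tendsto_ratio_of_pos`, by
periodicity), and since `F_j(z) ≠ 0` the values `Q_{mp+j}(z)` are eventually nonzero. Telescoping
then gives `Q_{n-i} / Q_n → 1 / (F_k ⋯ F_{k-i+1})` (`tendsto_quotient`).
-/

open MeasureTheory Polynomial Filter Topology

noncomputable section

/-- `j`-th (0-based) component of the staircase multi-index associated with `n`. -/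
def nComp (p n j : ℕ) : ℕ := n / p + if j < n % p then 1 else 0

/-- A set of reals viewed as a subset of `ℂ`. -/
def cset (s : Set ℝ) : Set ℂ := Complex.ofReal '' s

/-- Auxiliary: iterated Nikishin density with fuel. -/
noncomputable def nikDenAux (σ : ℕ → Measure ℝ) : ℕ → ℕ → ℝ → ℝ
  | 0, _, _ => 1
  | m + 1, a, x => ∫ t, nikDenAux σ m (a + 1) t / (x - t) ∂(σ (a + 1))

/-- Density of the Nikishin product `⟨σ_a, σ_{a+1}, …, σ_b⟩` with respect to `σ_a` (0-based). -/
noncomputable def nikDen (σ : ℕ → Measure ℝ) (a b : ℕ) : ℝ → ℝ := nikDenAux σ (b - a) a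

/-- Truncated banded Hessenberg (block Toeplitz) matrix built from the limit coefficients `b`. -/
def Tmat (b : ℕ → ℕ → ℝ) (p n : ℕ) : Matrix (Fin n) (Fin n) ℝ :=
  Matrix.of fun i j =>
    if (j : ℕ) = (i : ℕ) + 1 then 1
    else if (j : ℕ) ≤ (i : ℕ) ∧ (i : ℕ) ≤ (j : ℕ) + p then b i j else 0

/-- Chebyshev-Nikishin polynomial `P_n(z) = det (z I_n - T_n)`. -/
noncomputable def Ppoly (b : ℕ → ℕ → ℝ) (p n : ℕ) : Polynomial ℝ := (Tmat b p n).charpoly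

/-- The block `B_0`. -/
def B0mat (b : ℕ → ℕ → ℝ) (p : ℕ) : Matrix (Fin p) (Fin p) ℝ :=
  Matrix.of fun i j => if (j : ℕ) = (i : ℕ) + 1 then 1 else if (j : ℕ) ≤ (i : ℕ) then b i j else 0

/-- The block `B_1`. -/
def B1mat (b : ℕ → ℕ → ℝ) (p : ℕ) : Matrix (Fin p) (Fin p) ℝ :=
  Matrix.of fun i j => if (i : ℕ) ≤ (j : ℕ) then b (p + i) j else 0

/-- The block `B_{-1}`. -/
def Bm1mat (p : ℕ) : Matrix (Fin p) (Fin p) ℝ :=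
  Matrix.of fun i j => if (i : ℕ) = p - 1 ∧ (j : ℕ) = 0 then 1 else 0

/-- The block Toeplitz symbol `F(z,x) = z⁻¹ B_{-1} + B_0 + z B_1 - x I_p`. -/
noncomputable def symb (b : ℕ → ℕ → ℝ) (p : ℕ) (z x : ℂ) : Matrix (Fin p) (Fin p) ℂ :=
  z⁻¹ • (Bm1mat p).map Complex.ofReal + (B0mat b p).map Complex.ofReal
    + z • (B1mat b p).map Complex.ofReal - x • (1 : Matrix (Fin p) (Fin p) ℂ)

/-- The polynomial (in `z`) `det (B_{-1} + z (B_0 - x I) + z² B_1) = z^p f(z,x)`. -/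
noncomputable def symbPoly (b : ℕ → ℕ → ℝ) (p : ℕ) (x : ℂ) : Polynomial ℂ :=
  Matrix.det (Matrix.of fun i j : Fin p =>
    Polynomial.C ((Bm1mat p i j : ℝ) : ℂ)
      + Polynomial.C (((B0mat b p i j : ℝ) : ℂ) - if i = j then x else 0) * Polynomial.X
      + Polynomial.C ((B1mat b p i j : ℝ) : ℂ) * Polynomial.X ^ 2)

/-- Row embedding deleting the last row. -/
def rowEmb (p : ℕ) : Fin (p - 1) → Fin p := fun i => ⟨i, by have := i.2; omega⟩

/-- Column embedding deleting the (1-based) column `c`. -/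
def colEmb (p c : ℕ) : Fin (p - 1) → Fin p := fun i =>
  if (i : ℕ) + 1 < c then ⟨i, by have := i.2; omega⟩ else ⟨(i : ℕ) + 1, by have := i.2; omega⟩

/-- `det F^{[p,c]}(z,x)`: determinant of the symbol with row `p` and (1-based) column `c` deleted. -/
noncomputable def detSub (b : ℕ → ℕ → ℝ) (p c : ℕ) (z x : ℂ) : ℂ :=
  Matrix.det ((symb b p z x).submatrix (rowEmb p) (colEmb p c))


/-- Periodicity carries the ratio limits from the indices `1, …, p` to all `j ≥ 1`, together with
the non-vanishing of the limit. -/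
theorem tendsto_ratio_of_pos {p : ℕ} (hp : 1 ≤ p) {q f : ℕ → ℂ} (hper : ∀ j, f (j + p) = f j)
    (hlim : ∀ j, 1 ≤ j → j ≤ p →
      Tendsto (fun m => q (m * p + j) / q (m * p + j - 1)) atTop (𝓝 (f j)))
    (hne : ∀ j, 1 ≤ j → j ≤ p → f j ≠ 0) (j : ℕ) (hj : 1 ≤ j) :
    Tendsto (fun m => q (m * p + j) / q (m * p + j - 1)) atTop (𝓝 (f j)) ∧ f j ≠ 0 := by
  induction j using Nat.strong_induction_on with
  | _ j ih =>
    by_cases hjp : j ≤ p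
    · exact ⟨hlim j hj hjp, hne j hj hjp⟩
    · obtain ⟨i, rfl⟩ : ∃ i, j = i + p := ⟨j - p, by omega⟩
      obtain ⟨h1, h2⟩ := ih i (by omega) (by omega)
      rw [hper]
      refine ⟨(h1.comp (tendsto_add_atTop_nat 1)).congr fun m => ?_, h2⟩
      have : (m + 1) * p + i = m * p + (i + p) := by ring
      simp only [Function.comp_apply, this]

/-- A nonzero ratio limit forces the numerators to be eventually nonzero, because `x / y ≠ 0`
requires `x ≠ 0`. -/
theorem eventually_ne_zero_of_tendsto_ratio {u v : ℕ → ℂ} {c : ℂ}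
    (h : Tendsto (fun m => u m / v m) atTop (𝓝 c)) (hc : c ≠ 0) : ∀ᶠ m in atTop, u m ≠ 0 := by
  filter_upwards [h.eventually_ne hc] with m hm hu
  exact hm (by simp [hu])

/-- Telescoping of the ratio limits: `q_{n-i} / q_n` is the inverse of the product of the `i`
consecutive ratios `q_{n-t} / q_{n-t-1}`, `t < i`. -/
theorem tendsto_quotient {p : ℕ} {q f : ℕ → ℂ}
    (h : ∀ j, 1 ≤ j →
      Tendsto (fun m => q (m * p + j) / q (m * p + j - 1)) atTop (𝓝 (f j)) ∧ f j ≠ 0)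
    (s : ℕ) (hs : 1 ≤ s) (i : ℕ) (hi : i ≤ s) :
    Tendsto (fun m => q (m * p + (s - i)) / q (m * p + s)) atTop
      (𝓝 (∏ t ∈ Finset.range i, f (s - t))⁻¹) := by
  induction i with
  | zero =>
    refine (tendsto_congr' ?_).2 (tendsto_const_nhds (x := ((∏ t ∈ Finset.range 0, f (s - t))⁻¹)))
    filter_upwards [eventually_ne_zero_of_tendsto_ratio (h s hs).1 (h s hs).2] with m hm
    simp [hm]
  | succ i ih =>
    obtain ⟨h1, h2⟩ := h (s - i) (by omega)
    rw [Finset.prod_range_succ, mul_inv]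
    refine ((ih (by omega)).mul (h1.inv₀ h2)).congr' ?_
    filter_upwards [eventually_ne_zero_of_tendsto_ratio h1 h2] with m hm
    have e : m * p + (s - i) - 1 = m * p + (s - (i + 1)) := by omega
    rw [e, inv_div]
    field_simp

theorem limit_recurrence_relation_for_F
    (p : ℕ) (hp : 1 ≤ p)
    (Δ : ℕ → Set ℝ)
    (hΔ : ∀ k < p, ∃ α β : ℝ, α ≤ β ∧ Δ k = Set.Icc α β)
    (hΔdisj : ∀ k, k + 1 < p → Δ k ∩ Δ (k + 1) = ∅)
    (σ : ℕ → Measure ℝ)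
    (hσfin : ∀ k < p, IsFiniteMeasure (σ k))
    (hσsupp : ∀ k < p, σ k (Δ k)ᶜ = 0)
    (hσpos : ∀ k < p, ∀ᵐ x ∂(volume.restrict (Δ k)), 0 < (σ k).rnDeriv volume x)
    (Q : ℕ → Polynomial ℝ)
    (hQmonic : ∀ n, (Q n).Monic) (hQdeg : ∀ n, (Q n).natDegree = n)
    (hQorth : ∀ n, ∀ j < p, ∀ l < nComp p n j,
      ∫ x, (Q n).eval x * x ^ l * nikDen σ 0 j x ∂(σ 0) = 0)
    (a : ℕ → ℕ → ℝ)
    (hrec : ∀ n, (Polynomial.X : Polynomial ℝ) * Q n = Q (n + 1)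
      + ∑ i ∈ Finset.range (p + 1),
          if i ≤ n then Polynomial.C (a n (n - i)) * Q (n - i) else 0)
    (b : ℕ → ℕ → ℝ)
    (hbper : ∀ i j, b (i + p) (j + p) = b i j)
    (hblim : ∀ j i : ℕ, j ≤ i → i ≤ j + p →
      Tendsto (fun m => a (m * p + i) (m * p + j)) atTop (nhds (b i j)))
    (F : ℕ → ℂ → ℂ) (hFper : ∀ k, F (k + p) = F k)
    (hFlim : ∀ k, 1 ≤ k → k ≤ p → ∀ K : Set ℂ, IsCompact K → K ⊆ (cset (Δ 0))ᶜ →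
      TendstoUniformlyOn
        (fun m z => Polynomial.aeval z (Q (m * p + k)) / Polynomial.aeval z (Q (m * p + k - 1)))
        (F k) atTop K)
    (hFanal : ∀ k, 1 ≤ k → k ≤ p → AnalyticOnNhd ℂ (F k) (cset (Δ 0))ᶜ)
    (hFne : ∀ k, 1 ≤ k → k ≤ p → ∀ z ∈ (cset (Δ 0))ᶜ, F k z ≠ 0)
    :
    ∀ k < p, ∀ z ∈ (cset (Δ 0))ᶜ,
      z = F (k + 1) z + (b k k : ℂ)
        + ∑ i ∈ Finset.Icc 1 p,
            (b (p + k) (p + k - i) : ℂ) / ∏ t ∈ Finset.range i, F (p + k - t) z := by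
  intro k hk z hz
  set q : ℕ → ℂ := fun n => Polynomial.aeval z (Q n) with hq
  have hlim : ∀ j, 1 ≤ j → j ≤ p →
      Tendsto (fun m => q (m * p + j) / q (m * p + j - 1)) atTop (𝓝 (F j z)) := fun j h1 h2 =>
    (hFlim j h1 h2 {z} isCompact_singleton (by simpa using hz)).tendsto_at rfl
  have hr := tendsto_ratio_of_pos (f := fun j => F j z) hp
    (fun j => congrFun (hFper j) z) hlim (fun j h1 h2 => hFne j h1 h2 z hz)
  have hnext := (hr (p + k + 1) (by omega)).1
  have hcoef : ∀ i ∈ Finset.range (p + 1), Tendsto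
      (fun m => (a (m * p + (p + k)) (m * p + (p + k - i)) : ℂ)
        * (q (m * p + (p + k - i)) / q (m * p + (p + k)))) atTop
      (𝓝 ((b (p + k) (p + k - i) : ℂ) * (∏ t ∈ Finset.range i, F (p + k - t) z)⁻¹)) := by
    intro i hi
    have hi' : i ≤ p := by simpa [Nat.lt_succ_iff] using hi
    exact ((Complex.continuous_ofReal.tendsto _).comp
      (hblim (p + k - i) (p + k) (by omega) (by omega))).mul
      (tendsto_quotient hr (p + k) (by omega) i (by omega))
  have hsum := hnext.add (tendsto_finsetSum _ hcoef)
  -- The sequence converging in `hsum` is eventually constant, equal to `z`, by the recurrence.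
  have hz' : z = F (p + k + 1) z + ∑ i ∈ Finset.range (p + 1),
      (b (p + k) (p + k - i) : ℂ) * (∏ t ∈ Finset.range i, F (p + k - t) z)⁻¹ := by
    refine tendsto_nhds_unique (tendsto_const_nhds (x := z) (f := atTop)) (hsum.congr' ?_)
    obtain ⟨h1, h2⟩ := hr (p + k) (by omega)
    filter_upwards [eventually_ne_zero_of_tendsto_ratio h1 h2] with m hm
    have h := congrArg (Polynomial.aeval z) (hrec (m * p + (p + k)))
    rw [map_mul, map_add, map_sum, Polynomial.aeval_X] at h
    have hs : ∑ i ∈ Finset.range (p + 1), Polynomial.aeval z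
          (if i ≤ m * p + (p + k) then
            Polynomial.C (a (m * p + (p + k)) (m * p + (p + k) - i)) * Q (m * p + (p + k) - i)
          else 0)
        = ∑ i ∈ Finset.range (p + 1), (a (m * p + (p + k)) (m * p + (p + k - i)) : ℂ)
            * q (m * p + (p + k - i)) := by
      refine Finset.sum_congr rfl fun i hi => ?_
      have hi' : i ≤ p := by simpa [Nat.lt_succ_iff] using hi
      have e : m * p + (p + k) - i = m * p + (p + k - i) := by omega
      rw [if_pos (by omega), e, map_mul, Polynomial.aeval_C]
      rfl
    rw [hs] at h
    change z * q (m * p + (p + k)) = q (m * p + (p + k) + 1) + _ at h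
    have e1 : m * p + (p + k + 1) = m * p + (p + k) + 1 := by omega
    rw [e1, Nat.add_sub_cancel]
    simp only [← mul_div_assoc]
    rw [← Finset.sum_div, ← add_div, ← h, mul_div_cancel_right₀ _ hm]
  have hF : F (p + k + 1) = F (k + 1) := by rw [← hFper (k + 1)]; congr 1; ring
  have hb : b (p + k) (p + k) = b k k := by rw [← hbper k k, add_comm]
  rw [Finset.sum_range_succ', hF, Nat.sub_zero, hb] at hz'
  rw [← Finset.Ico_succ_right_eq_Icc, Finset.sum_Ico_eq_sum_range]
  simp only [Finset.range_zero, Finset.prod_empty, inv_one, mul_one] at hz'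
  simp only [div_eq_mul_inv, Order.succ_eq_add_one,
    Nat.add_sub_cancel, add_comm 1]
  conv_lhs => rw [hz']
  ring

end
end
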